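/- If T is typable, Tσ ∈ 𝒟, and σ → σ' (i.e., xσ → xσ' for exactly one variable x and yσ = yσ' for all y ≠ x), then ⟦T⟧σ = ⟦T⟧σ' (the interpretation of types is invariant by reduction of the substitution). -/

import Mathlib

set_option maxHeartbeats 1000000

/-! # Terms of λΠ/R (de Bruijn representation) -/

inductive Trm (F : Type) : Type
  | type : Trm F
  | kind : Trm F
  | var : ℕ → Trm F
  | sym : F → Trm F
  | pi : Trm F → Trm F → Trm F
  | app : Trm F → Trm F → Trm F
  | lam : Trm F → Trm F → Trm F

namespace Trm

variable {F : Type}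

/-- Lifting of a renaming under a binder. -/
def upRen (ρ : ℕ → ℕ) : ℕ → ℕ
  | 0 => 0
  | n + 1 => ρ n + 1

/-- Renaming of (de Bruijn) variables. -/
def rename (ρ : ℕ → ℕ) : Trm F → Trm F
  | .type => .type
  | .kind => .kind
  | .var n => .var (ρ n)
  | .sym f => .sym f
  | .pi A B => .pi (rename ρ A) (rename (upRen ρ) B)
  | .app t u => .app (rename ρ t) (rename ρ u)
  | .lam A b => .lam (rename ρ A) (rename (upRen ρ) b)

/-- Lifting of a substitution under a binder. -/
def up (σ : ℕ → Trm F) : ℕ → Trm F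
  | 0 => .var 0
  | n + 1 => rename Nat.succ (σ n)

/-- Capture-avoiding (parallel) substitution. -/
def subst (σ : ℕ → Trm F) : Trm F → Trm F
  | .type => .type
  | .kind => .kind
  | .var n => σ n
  | .sym f => .sym f
  | .pi A B => .pi (subst σ A) (subst (up σ) B)
  | .app t u => .app (subst σ t) (subst σ u)
  | .lam A b => .lam (subst σ A) (subst (up σ) b)

/-- Cons of a term on a substitution: `scons a σ` maps `0` to `a` and `n+1` to `σ n`. -/
def scons (a : Trm F) (σ : ℕ → Trm F) : ℕ → Trm F
  | 0 => a
  | n + 1 => σ n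

/-- Substitution of the first free variable: `t[x ↦ a]`. -/
def subst1 (a t : Trm F) : Trm F := subst (scons a .var) t

/-- Shifting of all free variables. -/
def shift : Trm F → Trm F := rename Nat.succ

/-- Application of a head term to a list of arguments: `appList h [t1,…,tn] = h t1 … tn`. -/
def appList (h : Trm F) : List (Trm F) → Trm F
  | [] => h
  | a :: as => appList (.app h a) as

/-- Free (de Bruijn) variables of a term. -/
def FV : Trm F → Set ℕ
  | .type => ∅
  | .kind => ∅
  | .var n => {n}
  | .sym _ => ∅
  | .pi A B => FV A ∪ {n | n + 1 ∈ FV B}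
  | .app t u => FV t ∪ FV u
  | .lam A b => FV A ∪ {n | n + 1 ∈ FV b}

/-- The class 𝕂 of kinds: `K = TYPE | Πx:t.K`. -/
def IsKind : Trm F → Prop
  | .type => True
  | .pi _ B => IsKind B
  | _ => False

/-- Sorts: `TYPE` and `KIND`. -/
def IsSort (s : Trm F) : Prop := s = .type ∨ s = .kind

/-- The product arity of a term: the number of leading products. -/
def piArity : Trm F → ℕ
  | .pi _ B => piArity B + 1
  | _ => 0

/-- Strip `n` leading products. -/
def piCodN : ℕ → Trm F → Trm F
  | 0, T => T
  | n + 1, .pi _ B => piCodN n B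
  | _ + 1, T => T

/-- The first `n` domains of the leading products, as a de Bruijn context
(type of variable `0` first, i.e. innermost first). -/
def teleN : ℕ → Trm F → List (Trm F)
  | 0, _ => []
  | n + 1, .pi A B => teleN n B ++ [A]
  | _ + 1, _ => []

/-- The full telescope of leading products, as a de Bruijn context. -/
def telescope (T : Trm F) : List (Trm F) := teleN (piArity T) T

/-- The domains of the leading products, outermost first. -/
def piDoms : Trm F → List (Trm F)
  | .pi A B => A :: piDoms B
  | _ => []

end Trm

/-- The subterm relation (reflexive and transitive). -/
inductive Subterm {F : Type} : Trm F → Trm F → Prop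
  | refl (t : Trm F) : Subterm t t
  | piL {t A B} : Subterm t A → Subterm t (.pi A B)
  | piR {t A B} : Subterm t B → Subterm t (.pi A B)
  | appL {t u v} : Subterm t u → Subterm t (.app u v)
  | appR {t u v} : Subterm t v → Subterm t (.app u v)
  | lamL {t A b} : Subterm t A → Subterm t (.lam A b)
  | lamR {t A b} : Subterm t b → Subterm t (.lam A b)

/-! # Rewriting -/

/-- A set of rewriting rules `l → r`. -/
abbrev Rules (F : Type) := Set (Trm F × Trm F)

/-- `R` is a rewriting system: for every rule `l → r`, `FV(r) ⊆ FV(l)` and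
`l` is of the form `f l⃗`. -/
def IsRewriteSystem {F : Type} (R : Rules F) : Prop :=
  ∀ p ∈ R, Trm.FV p.2 ⊆ Trm.FV p.1 ∧ ∃ (f : F) (ls : List (Trm F)), p.1 = Trm.appList (.sym f) ls

/-- A symbol is defined if it heads the left-hand side of some rule. -/
def Defined {F : Type} (R : Rules F) (f : F) : Prop :=
  ∃ (ls : List (Trm F)) (r : Trm F), (Trm.appList (.sym f) ls, r) ∈ R

/-- One-step reduction `→ = →β ∪ →R`: β-reduction together with the closure of the
rules of `R` by substitution and context. -/
inductive Red {F : Type} (R : Rules F) : Trm F → Trm F → Prop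
  | beta (A b a : Trm F) : Red R (.app (.lam A b) a) (Trm.subst1 a b)
  | rule {l r : Trm F} (σ : ℕ → Trm F) : (l, r) ∈ R → Red R (Trm.subst σ l) (Trm.subst σ r)
  | appL {t t' u} : Red R t t' → Red R (.app t u) (.app t' u)
  | appR {t u u'} : Red R u u' → Red R (.app t u) (.app t u')
  | piL {A A' B} : Red R A A' → Red R (.pi A B) (.pi A' B)
  | piR {A B B'} : Red R B B' → Red R (.pi A B) (.pi A B')
  | lamL {A A' b} : Red R A A' → Red R (.lam A b) (.lam A' b)
  | lamR {A b b'} : Red R b b' → Red R (.lam A b) (.lam A b')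

/-- Multi-step reduction `→*`. -/
def RedStar {F : Type} (R : Rules F) : Trm F → Trm F → Prop := Relation.ReflTransGen (Red R)

/-- Joinability `↓`. -/
def Joinable {F : Type} (R : Rules F) (t u : Trm F) : Prop :=
  ∃ v, RedStar R t v ∧ RedStar R u v

/-- Local confluence: `← · → ⊆ →* · *←`. -/
def LocallyConfluent {F : Type} (R : Rules F) : Prop :=
  ∀ t u v, Red R t u → Red R t v → Joinable R u v

/-- `t` is strongly normalizing (terminating): no infinite reduction sequence from `t`. -/
def SN {F : Type} (R : Rules F) (t : Trm F) : Prop := Acc (fun a b => Red R b a) t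

/-- The set of strongly normalizing terms. -/
def SNset {F : Type} (R : Rules F) : Set (Trm F) := {t | SN R t}

/-- `t` is in normal form. -/
def NormalForm {F : Type} (R : Rules F) (t : Trm F) : Prop := ∀ u, ¬ Red R t u

/-- Neutral terms: `(λx:A.t)u v⃗`, `x v⃗`, or `f v⃗` where every rule `f l⃗ → r ∈ R`
satisfies `|l⃗| ≤ |v⃗|`. -/
def Neutral {F : Type} (R : Rules F) (t : Trm F) : Prop :=
  (∃ (A b a : Trm F) (vs : List (Trm F)), t = Trm.appList (.app (.lam A b) a) vs) ∨
  (∃ (x : ℕ) (vs : List (Trm F)), t = Trm.appList (.var x) vs) ∨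
  (∃ (f : F) (vs : List (Trm F)), t = Trm.appList (.sym f) vs ∧
    ∀ (ls : List (Trm F)) (r : Trm F), (Trm.appList (.sym f) ls, r) ∈ R → ls.length ≤ vs.length)

/-- Computability predicates: `S ⊆ SN`, `S` is closed under reduction, and `S` contains
every neutral term all of whose one-step reducts are in `S`. -/
def IsCompPred {F : Type} (R : Rules F) (S : Set (Trm F)) : Prop :=
  S ⊆ SNset R ∧ (∀ t ∈ S, ∀ u, Red R t u → u ∈ S) ∧
  (∀ t, Neutral R t → (∀ u, Red R t u → u ∈ S) → t ∈ S)

/-! # Typing: λP extended with function symbols and conversion modulo `→` -/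

/-- The typing rules of λΠ/R: the rules of λP (in de Bruijn presentation) with the extra
rule (fun) `⊢ f : Θ_f` and conversion up to joinability for `→`. -/
inductive Typing {F : Type} (R : Rules F) (Θ sΘ : F → Trm F) :
    List (Trm F) → Trm F → Trm F → Prop
  | ax : Typing R Θ sΘ [] .type .kind
  | var {Γ A s} : Trm.IsSort s → Typing R Θ sΘ Γ A s →
      Typing R Θ sΘ (A :: Γ) (.var 0) (Trm.shift A)
  | weak {Γ A s b B} : Trm.IsSort s → Typing R Θ sΘ Γ A s → Typing R Θ sΘ Γ b B →
      Typing R Θ sΘ (A :: Γ) (Trm.shift b) (Trm.shift B)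
  | prod {Γ A B s} : Trm.IsSort s → Typing R Θ sΘ Γ A .type → Typing R Θ sΘ (A :: Γ) B s →
      Typing R Θ sΘ Γ (.pi A B) s
  | abs {Γ A b B s} : Trm.IsSort s → Typing R Θ sΘ (A :: Γ) b B →
      Typing R Θ sΘ Γ (.pi A B) s → Typing R Θ sΘ Γ (.lam A b) (.pi A B)
  | app {Γ t a A B} : Typing R Θ sΘ Γ t (.pi A B) → Typing R Θ sΘ Γ a A →
      Typing R Θ sΘ Γ (.app t a) (Trm.subst1 a B)
  | conv {Γ a A B s} : Typing R Θ sΘ Γ a A → Joinable R A B → Typing R Θ sΘ Γ B s →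
      Trm.IsSort s → Typing R Θ sΘ Γ a B
  | symb (f : F) : Trm.IsSort (sΘ f) → Typing R Θ sΘ [] (Θ f) (sΘ f) →
      Typing R Θ sΘ [] (.sym f) (Θ f)

/-- `→` preserves typing (subject reduction). -/
def PresTyping {F : Type} (R : Rules F) (Θ sΘ : F → Trm F) : Prop :=
  ∀ Γ t u T, Typing R Θ sΘ Γ t T → Red R t u → Typing R Θ sΘ Γ u T

/-- A substitution `γ` is well-typed from `Δ` to `Γ` (for a generic typing judgment `Ty`):
for all `(x : T) ∈ Δ`, `Ty Γ (xγ) (Tγ)`. -/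
def SubstTyped {F : Type} (Ty : List (Trm F) → Trm F → Trm F → Prop)
    (Γ : List (Trm F)) (γ : ℕ → Trm F) (Δ : List (Trm F)) : Prop :=
  ∀ i A, Δ[i]? = some A → Ty Γ (γ i) (Trm.subst (fun j => γ (j + i + 1)) A)

/-! # Interpretation of types as computability predicates -/

/-- `𝕀`: partial functions from terms to sets of terms. -/
abbrev Interp (F : Type) := Trm F → Part (Set (Trm F))

/-- Graph inclusion of partial functions. -/
def InterpLE {F : Type} (I J : Interp F) : Prop := ∀ T S, S ∈ I T → S ∈ J T

/-- `I` is the least fixpoint of `φ` on `𝕀` (ordered by graph inclusion). -/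
def IsLfpInterp {F : Type} (φ : Interp F → Interp F) (I : Interp F) : Prop :=
  φ I = I ∧ ∀ J, φ J = J → InterpLE I J

/-- The domain `D(I)`: terminating terms `T` such that whenever `T →* Πx:A.B`,
`A ∈ dom(I)` and `B[x↦a] ∈ dom(I)` for all `a ∈ I(A)`. -/
def domD {F : Type} (R : Rules F) (I : Interp F) : Set (Trm F) :=
  {T | SN R T ∧ ∀ A B, RedStar R T (.pi A B) →
    (I A).Dom ∧ ∀ S ∈ I A, ∀ a ∈ S, (I (Trm.subst1 a B)).Dom}

/-- `{t | ∀ a ∈ I(A), t a ∈ I(B[x↦a])}` (relational reading of the partial function `I`). -/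
def piPart {F : Type} (I : Interp F) (A B : Trm F) : Set (Trm F) :=
  {t | ∀ S ∈ I A, ∀ a ∈ S, ∀ S' ∈ I (Trm.subst1 a B), Trm.app t a ∈ S'}

open Classical in
/-- The monotone function `F : 𝕀 → 𝕀`: `dom(F(I)) = D(I)`; `F(I)(T) = SN` if the normal
form of `T` is not a product; `F(I)(T) = {t | ∀ a ∈ I(A), t a ∈ I(B[x↦a])}` if the normal
form of `T` is `Πx:A.B`. -/
noncomputable def interpF {F : Type} (R : Rules F) (I : Interp F) : Interp F := fun T =>
  ⟨T ∈ domD R I, fun _ =>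
    if h : ∃ A B, RedStar R T (.pi A B) ∧ NormalForm R (.pi A B) then
      piPart I h.choose h.choose_spec.choose
    else SNset R⟩

/-- The value of a partial interpretation at `T` (as a set). -/
def partMem {F : Type} (I : Interp F) (T : Trm F) : Set (Trm F) := {t | ∀ S ∈ I T, t ∈ S}

open Classical in
/-- The interpretation `⟦T⟧σ` of a term `T` wrt a substitution `σ`, relative to the least
fixpoint `I = ℐ` of `interpF`: `⟦s⟧σ = 𝒟` for `s` a sort;
`⟦Πx:A.K⟧σ = {t | ∀ a ∈ ⟦A⟧σ, t a ∈ ⟦K⟧[x↦a,σ]}` for `K` a kind;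
`⟦T⟧σ = ℐ(Tσ)` if `T` is neither a kind nor `KIND` and `Tσ ∈ 𝒟`; `⟦T⟧σ = SN` otherwise. -/
noncomputable def interp {F : Type} (R : Rules F) (I : Interp F) :
    Trm F → (ℕ → Trm F) → Set (Trm F)
  | .type, _ => domD R I
  | .kind, _ => domD R I
  | .pi A B, σ =>
      if Trm.IsKind B then
        {t | ∀ a ∈ interp R I A σ, Trm.app t a ∈ interp R I B (Trm.scons a σ)}
      else if Trm.subst σ (.pi A B) ∈ domD R I then partMem I (Trm.subst σ (.pi A B))
      else SNset R
  | .var n, σ =>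
      if Trm.subst σ (.var n) ∈ domD R I then partMem I (Trm.subst σ (.var n)) else SNset R
  | .sym g, σ =>
      if Trm.subst σ (.sym g) ∈ domD R I then partMem I (Trm.subst σ (.sym g)) else SNset R
  | .app t u, σ =>
      if Trm.subst σ (.app t u) ∈ domD R I then partMem I (Trm.subst σ (.app t u)) else SNset R
  | .lam A b, σ =>
      if Trm.subst σ (.lam A b) ∈ domD R I then partMem I (Trm.subst σ (.lam A b)) else SNset R

/-- `σ ⊨ Γ`: a substitution is adequate wrt an environment. -/
def Models {F : Type} (R : Rules F) (I : Interp F) (σ : ℕ → Trm F) (Γ : List (Trm F)) : Prop :=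
  ∀ i A, Γ[i]? = some A → σ i ∈ interp R I A (fun j => σ (j + i + 1))

/-- The typing map `Θ` is adequate: `f ∈ ⟦Θ_f⟧` whenever `⊢ Θ_f : s_f` and `Θ_f ∈ ⟦s_f⟧`. -/
def Adequate {F : Type} (R : Rules F) (Θ sΘ : F → Trm F) (I : Interp F) : Prop :=
  ∀ f : F, Typing R Θ sΘ [] (Θ f) (sΘ f) → Θ f ∈ interp R I (sΘ f) Trm.var →
    Trm.sym f ∈ interp R I (Θ f) Trm.var

/-- The substitution `[x⃗ ↦ l⃗]` (where `ls` lists the images of variables `0, 1, …`). -/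
def mkSubst {F : Type} (ls : List (Trm F)) : ℕ → Trm F := fun i =>
  (ls[i]?).getD (.var (i - ls.length))

/-- Composition of substitutions: `x ↦ (xγ)σ`. -/
def compSubst {F : Type} (γ σ : ℕ → Trm F) : ℕ → Trm F := fun i => Trm.subst σ (γ i)

/-- The set `ℂ` of terms `f t⃗` with `|t⃗| = arit(Θ_f)`, `⊢ Θ_f : s_f`, `Θ_f ∈ ⟦s_f⟧` and
`[x⃗↦t⃗] ⊨ Γ_f`. -/
def CC {F : Type} (R : Rules F) (Θ sΘ : F → Trm F) (I : Interp F) : Set (Trm F) :=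
  {t | ∃ (f : F) (ts : List (Trm F)), t = Trm.appList (.sym f) ts ∧
    ts.length = Trm.piArity (Θ f) ∧
    Typing R Θ sΘ [] (Θ f) (sΘ f) ∧ Θ f ∈ interp R I (sΘ f) Trm.var ∧
    Models R I (mkSubst ts.reverse) (Trm.telescope (Θ f))}

/-! # Dependency pairs -/

/-- Occurrences of `p` in a term, not at the root, such that `p` is not further applied
(i.e. `p` collects all the arguments of its head at this occurrence). -/
inductive MaxOccNR {F : Type} (p : Trm F) : Trm F → Prop
  | appL {u v} : MaxOccNR p u → MaxOccNR p (.app u v)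
  | appR {u v} : MaxOccNR p v → MaxOccNR p (.app u v)
  | appRroot {u} : MaxOccNR p (.app u p)
  | piL {A B} : MaxOccNR p A → MaxOccNR p (.pi A B)
  | piLroot {B} : MaxOccNR p (.pi p B)
  | piR {A B} : MaxOccNR p B → MaxOccNR p (.pi A B)
  | piRroot {A} : MaxOccNR p (.pi A p)
  | lamL {A b} : MaxOccNR p A → MaxOccNR p (.lam A b)
  | lamLroot {b} : MaxOccNR p (.lam p b)
  | lamR {A b} : MaxOccNR p b → MaxOccNR p (.lam A b)
  | lamRroot {A} : MaxOccNR p (.lam A p)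

/-- `p` occurs in `t` as a maximal application. -/
def MaxOcc {F : Type} (p t : Trm F) : Prop := t = p ∨ MaxOccNR p t

/-- Dependency pairs: `f l⃗ > g m⃗` iff there is a rule `f l⃗ → r ∈ R`, `g` is defined and
`g m⃗` is a subterm of `r` such that `m⃗` are all the arguments to which `g` is applied. -/
def DepPair {F : Type} (R : Rules F) (f : F) (ls : List (Trm F)) (g : F)
    (ms : List (Trm F)) : Prop :=
  Defined R g ∧ ∃ r, (Trm.appList (.sym f) ls, r) ∈ R ∧ MaxOcc (Trm.appList (.sym g) ms) r

/-- `f t⃗ →arg f u⃗`: reduction of exactly one argument. -/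
def ArgRed {F : Type} (R : Rules F) (t u : Trm F) : Prop :=
  ∃ (f : F) (pre post : List (Trm F)) (a b : Trm F), Red R a b ∧
    t = Trm.appList (.sym f) (pre ++ a :: post) ∧ u = Trm.appList (.sym f) (pre ++ b :: post)

/-- `>ₛ`: the closure of the dependency pair relation by substitution and left-application:
`f t₁…t_p >ₛ g u₁…u_q` iff there are a dependency pair `f l₁…l_i > g m₁…m_j` with `i ≤ p`
and `j ≤ q` and a substitution `σ` such that `t_k →* l_kσ` for `k ≤ i` and `m_kσ = u_k`
for `k ≤ j`. -/
def GTsub {F : Type} (R : Rules F) (t u : Trm F) : Prop :=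
  ∃ (f g : F) (ts us ls ms : List (Trm F)) (σ : ℕ → Trm F),
    t = Trm.appList (.sym f) ts ∧ u = Trm.appList (.sym g) us ∧
    DepPair R f ls g ms ∧ ls.length ≤ ts.length ∧ ms.length ≤ us.length ∧
    (∀ (k : ℕ) (tk lk : Trm F), ts[k]? = some tk → ls[k]? = some lk → RedStar R tk (Trm.subst σ lk)) ∧
    (∀ (k : ℕ) (mk : Trm F), ms[k]? = some mk → us[k]? = some (Trm.subst σ mk))

/-- The call relation `≻̃ = →arg* · >ₛ` on `ℂ`. -/
def CallRel {F : Type} (R : Rules F) (Θ sΘ : F → Trm F) (I : Interp F) (t u : Trm F) : Prop :=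
  t ∈ CC R Θ sΘ I ∧ u ∈ CC R Θ sΘ I ∧
    ∃ v, Relation.ReflTransGen (ArgRed R) t v ∧ GTsub R v u

/-! # Precedence and well-structured systems -/

/-- `f ⪰ g` (one step): `g` occurs in `Θ_f` or in the right-hand side of a rule of `f`. -/
def PrecBase {F : Type} (R : Rules F) (Θ : F → Trm F) (f g : F) : Prop :=
  Subterm (.sym g) (Θ f) ∨
  ∃ (ls : List (Trm F)) (r : Trm F), (Trm.appList (.sym f) ls, r) ∈ R ∧ Subterm (.sym g) r

/-- `⪰`: the smallest quasi-order containing `PrecBase`. -/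
def Preceq {F : Type} (R : Rules F) (Θ : F → Trm F) : F → F → Prop :=
  Relation.ReflTransGen (PrecBase R Θ)

/-- `≻`: the strict part of `⪰`. -/
def Prec {F : Type} (R : Rules F) (Θ : F → Trm F) (f g : F) : Prop :=
  Preceq R Θ f g ∧ ¬ Preceq R Θ g f

/-- The restricted type system `⊢_{≺ f}`: as `Typing`, but function symbols may only be
introduced when strictly smaller than `f` in the precedence. -/
inductive LTyp {F : Type} (R : Rules F) (Θ sΘ : F → Trm F) (f : F) :
    List (Trm F) → Trm F → Trm F → Prop
  | ax : LTyp R Θ sΘ f [] .type .kind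
  | var {Γ A s} : Trm.IsSort s → LTyp R Θ sΘ f Γ A s →
      LTyp R Θ sΘ f (A :: Γ) (.var 0) (Trm.shift A)
  | weak {Γ A s b B} : Trm.IsSort s → LTyp R Θ sΘ f Γ A s → LTyp R Θ sΘ f Γ b B →
      LTyp R Θ sΘ f (A :: Γ) (Trm.shift b) (Trm.shift B)
  | prod {Γ A B s} : Trm.IsSort s → LTyp R Θ sΘ f Γ A .type → LTyp R Θ sΘ f (A :: Γ) B s →
      LTyp R Θ sΘ f Γ (.pi A B) s
  | abs {Γ A b B s} : Trm.IsSort s → LTyp R Θ sΘ f (A :: Γ) b B →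
      LTyp R Θ sΘ f Γ (.pi A B) s → LTyp R Θ sΘ f Γ (.lam A b) (.pi A B)
  | app {Γ t a A B} : LTyp R Θ sΘ f Γ t (.pi A B) → LTyp R Θ sΘ f Γ a A →
      LTyp R Θ sΘ f Γ (.app t a) (Trm.subst1 a B)
  | conv {Γ a A B s} : LTyp R Θ sΘ f Γ a A → Joinable R A B → LTyp R Θ sΘ f Γ B s →
      Trm.IsSort s → LTyp R Θ sΘ f Γ a B
  | symb (g : F) : Prec R Θ f g → Trm.IsSort (sΘ g) → LTyp R Θ sΘ f [] (Θ g) (sΘ g) →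
      LTyp R Θ sΘ f [] (.sym g) (Θ g)

/-- The arguments `y⃗γ = [y₁γ, …, y_jγ]` of an instantiated dependency pair right-hand
side, where `y_j` is de Bruijn variable `0`. -/
def dpArgs {F : Type} (γ : ℕ → Trm F) (j : ℕ) : List (Trm F) :=
  (List.range j).reverse.map γ

/-- The restricted type system `⊢_{f l⃗}` (computability closure): as `Typing`, except that
types are required to be typable using symbols smaller than `f` only, and function symbols
are introduced either as undefined constants or through instances of dependency pairs of
`f l⃗`. -/
inductive RTyp {F : Type} (R : Rules F) (Θ sΘ : F → Trm F) (f : F) (ls : List (Trm F)) :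
    List (Trm F) → Trm F → Trm F → Prop
  | ax : RTyp R Θ sΘ f ls [] .type .kind
  | var {Γ A s} : Trm.IsSort s → LTyp R Θ sΘ f Γ A s →
      RTyp R Θ sΘ f ls (A :: Γ) (.var 0) (Trm.shift A)
  | weak {Γ A s b B} : Trm.IsSort s → LTyp R Θ sΘ f Γ A s → RTyp R Θ sΘ f ls Γ b B →
      RTyp R Θ sΘ f ls (A :: Γ) (Trm.shift b) (Trm.shift B)
  | prod {Γ A B s} : Trm.IsSort s → RTyp R Θ sΘ f ls Γ A .type →
      RTyp R Θ sΘ f ls (A :: Γ) B s → RTyp R Θ sΘ f ls Γ (.pi A B) s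
  | abs {Γ A b B s} : Trm.IsSort s → RTyp R Θ sΘ f ls (A :: Γ) b B →
      LTyp R Θ sΘ f Γ (.pi A B) s → RTyp R Θ sΘ f ls Γ (.lam A b) (.pi A B)
  | app {Γ t a A B s} : Trm.IsSort s → RTyp R Θ sΘ f ls Γ t (.pi A B) →
      RTyp R Θ sΘ f ls Γ a A → LTyp R Θ sΘ f Γ (.pi A B) s →
      RTyp R Θ sΘ f ls Γ (.app t a) (Trm.subst1 a B)
  | conv {Γ a A B s s'} : Trm.IsSort s → Trm.IsSort s' → RTyp R Θ sΘ f ls Γ a A →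
      Joinable R A B → LTyp R Θ sΘ f Γ B s → LTyp R Θ sΘ f Γ A s' →
      RTyp R Θ sΘ f ls Γ a B
  | dp {Γ : List (Trm F)} (g : F) (γ : ℕ → Trm F) (j : ℕ) :
      j ≤ Trm.piArity (Θ g) → Trm.IsSort (sΘ g) → LTyp R Θ sΘ f [] (Θ g) (sΘ g) →
      (∀ i A, (Trm.teleN j (Θ g))[i]? = some A →
        RTyp R Θ sΘ f ls Γ (γ i) (Trm.subst (fun k => γ (k + i + 1)) A)) →
      DepPair R f ls g (dpArgs γ j) →
      RTyp R Θ sΘ f ls Γ (Trm.appList (.sym g) (dpArgs γ j)) (Trm.subst γ (Trm.piCodN j (Θ g)))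
  | const (g : F) : ¬ Defined R g → Trm.IsSort (sΘ g) → LTyp R Θ sΘ f [] (Θ g) (sΘ g) →
      RTyp R Θ sΘ f ls [] (.sym g) (Θ g)

/-- `R` is well-structured (wrt the assignment `Δ` of an environment to every rule):
(a) `≻` is well-founded; (b) `|l⃗| ≤ arit(Θ_f)` for every rule `f l⃗ → r`;
(c) `|m⃗| ≤ arit(Θ_g)` for every dependency pair `f l⃗ > g m⃗`;
(d) `Δ_{f l⃗→r} ⊢_{f l⃗} r : U[x⃗↦l⃗]` for every rule `f l⃗ → r`, where `Θ_f = Πx⃗:T⃗.U`. -/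
def WellStructured {F : Type} (R : Rules F) (Θ sΘ : F → Trm F)
    (Δ : Trm F → Trm F → List (Trm F)) : Prop :=
  WellFounded (fun g f => Prec R Θ f g) ∧
  (∀ l r, (l, r) ∈ R → ∀ (f : F) ls, l = Trm.appList (.sym f) ls →
    ls.length ≤ Trm.piArity (Θ f)) ∧
  (∀ (f : F) ls (g : F) ms, DepPair R f ls g ms → ms.length ≤ Trm.piArity (Θ g)) ∧
  (∀ l r, (l, r) ∈ R → ∀ (f : F) ls, l = Trm.appList (.sym f) ls →
    RTyp R Θ sΘ f ls (Δ l r) r (Trm.subst (mkSubst ls.reverse) (Trm.piCodN ls.length (Θ f))))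

/-- `R` is accessible: for every rule `f l⃗ → r` with `Θ_f = Πx⃗:T⃗.U`, `|x⃗| = |l⃗|`, and
every substitution `σ`, `σ ⊨ Δ_{f l⃗→r}` whenever `⊢ Θ_f : s_f`, `Θ_f ∈ ⟦s_f⟧` and
`[x⃗↦l⃗]σ ⊨ x⃗:T⃗`. -/
def Accessible {F : Type} (R : Rules F) (Θ sΘ : F → Trm F) (I : Interp F)
    (Δ : Trm F → Trm F → List (Trm F)) : Prop :=
  ∀ l r, (l, r) ∈ R → ∀ (f : F) ls, l = Trm.appList (.sym f) ls → ∀ σ : ℕ → Trm F,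
    Typing R Θ sΘ [] (Θ f) (sΘ f) → Θ f ∈ interp R I (sΘ f) Trm.var →
    Models R I (compSubst (mkSubst ls.reverse) σ) (Trm.teleN ls.length (Θ f)) →
    Models R I σ (Δ l r)

/-- A term in `𝕂 ∪ {KIND}`. -/
def IsKindLike {F : Type} (t : Trm F) : Prop := Trm.IsKind t ∨ t = .kind

/-- `R` is plain function-passing (PFP): for every rule `f l⃗ → r` with `Θ_f = Πx⃗:T⃗.U` and
`|x⃗| = |l⃗|`, no `l_i` is a kind or `KIND`, and every `(y : T) ∈ Δ_{f l⃗→r}` satisfies: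
either there is `i` with `y = l_i` and `T = T_i[x⃗↦l⃗]`, or `y ∈ FV(l_i)` and `T = D t⃗`
with `D` undefined and `|t⃗| = arit(Θ_D)`. -/
def PFP {F : Type} (R : Rules F) (Θ : F → Trm F) (Δ : Trm F → Trm F → List (Trm F)) : Prop :=
  ∀ l r, (l, r) ∈ R → ∀ (f : F) ls, l = Trm.appList (.sym f) ls →
    (∀ li ∈ ls, ¬ IsKindLike li) ∧
    (∀ i A, (Δ l r)[i]? = some A →
      (∃ (k : ℕ) (Tk : Trm F), ls[k]? = some (Trm.var i) ∧ (Trm.piDoms (Θ f))[k]? = some Tk ∧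
        Trm.rename (fun j => j + i + 1) A = Trm.subst (mkSubst ((ls.take k).reverse)) Tk) ∨
      ((∃ (k : ℕ) (lk : Trm F), ls[k]? = some lk ∧ i ∈ Trm.FV lk) ∧
        ∃ (D : F) (ts : List (Trm F)), Trm.rename (fun j => j + i + 1) A =
          Trm.appList (.sym D) ts ∧ ¬ Defined R D ∧ ts.length = Trm.piArity (Θ D)))

/-! # Size-change termination -/

/-- Entries of size-change matrices: `−1`, `0` or `∞`. -/
inductive SCTe : Type
  | minusOne : SCTe
  | zero : SCTe
  | infty : SCTe
deriving DecidableEq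

/-- Min-plus multiplication of entries (addition, truncated at `−1`). -/
def SCTe.comp : SCTe → SCTe → SCTe
  | .infty, _ => .infty
  | _, .infty => .infty
  | .minusOne, _ => .minusOne
  | _, .minusOne => .minusOne
  | .zero, .zero => .zero

/-- Minimum of entries (`−1 < 0 < ∞`). -/
def SCTe.min : SCTe → SCTe → SCTe
  | .minusOne, _ => .minusOne
  | _, .minusOne => .minusOne
  | .zero, _ => .zero
  | .infty, x => x

/-- Base of the relation `⊵`: `f t₁…t_n ⊵ t_i` for `f ∈ F`. -/
def ArgSubBase {F : Type} (t u : Trm F) : Prop :=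
  ∃ (f : F) (ts : List (Trm F)), t = Trm.appList (.sym f) ts ∧ u ∈ ts

/-- `⊵`: the smallest transitive relation such that `f t₁…t_n ⊵ t_i` for `f ∈ F`. -/
def ArgGT {F : Type} : Trm F → Trm F → Prop := Relation.TransGen ArgSubBase

open Classical in
/-- The size-change matrix of a dependency pair `f l₁…l_p > g m₁…m_q`:
`a_{ij} = −1` if `l_i ⊵ m_j`, `a_{ij} = 0` if `l_i = m_j`, `a_{ij} = ∞` otherwise
(in particular if `i > p` or `j > q`). -/
noncomputable def dpMatrix {F : Type} (ls ms : List (Trm F)) : ℕ → ℕ → SCTe := fun i j =>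
  match ls[i]?, ms[j]? with
  | some li, some mj =>
      if ArgGT li mj then .minusOne else if li = mj then .zero else .infty
  | _, _ => .infty

/-- Min-plus product of matrices, the middle dimension being `d`. -/
def matComp (d : ℕ) (M N : ℕ → ℕ → SCTe) : ℕ → ℕ → SCTe := fun i j =>
  ((List.range d).map fun k => (M i k).comp (N k j)).foldr SCTe.min .infty

/-- The transitive closure of the call graph of `R`: edges are labeled by the matrices of
the dependency pairs, multiplied in the min-plus semiring along paths. -/
inductive TCEdge {F : Type} (R : Rules F) (Θ : F → Trm F) : F → F → (ℕ → ℕ → SCTe) → Prop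
  | base {f g : F} {ls ms : List (Trm F)} : DepPair R f ls g ms →
      TCEdge R Θ f g (dpMatrix ls ms)
  | comp {f g h : F} {M N : ℕ → ℕ → SCTe} : TCEdge R Θ f g M → TCEdge R Θ g h N →
      TCEdge R Θ f h (matComp (Trm.piArity (Θ g)) M N)

/-- `R` is size-change terminating: in the transitive closure of the call graph, every
idempotent matrix labeling a loop has some `−1` on its diagonal. -/
def SCT {F : Type} (R : Rules F) (Θ : F → Trm F) : Prop :=
  ∀ (f : F) (M : ℕ → ℕ → SCTe), TCEdge R Θ f f M → matComp (Trm.piArity (Θ f)) M M = M →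
    ∃ i < Trm.piArity (Θ f), M i i = SCTe.minusOne
/-- `σ → σ'`: `xσ → xσ'` for exactly one variable `x` and `yσ = yσ'` for all `y ≠ x`. -/
def SubstStep {F : Type} (R : Rules F) (σ σ' : ℕ → Trm F) : Prop :=
  ∃ x : ℕ, Red R (σ x) (σ' x) ∧ ∀ y : ℕ, y ≠ x → σ y = σ' y

namespace Trm

variable {F : Type}

theorem upRen_comp (ρ ρ' : ℕ → ℕ) : upRen ρ' ∘ upRen ρ = upRen (ρ' ∘ ρ) := by
  funext n; cases n <;> rfl

theorem rename_rename (t : Trm F) (ρ ρ' : ℕ → ℕ) :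
    rename ρ' (rename ρ t) = rename (ρ' ∘ ρ) t := by
  induction t generalizing ρ ρ' <;> simp_all [rename, upRen_comp]

theorem up_comp_upRen (ρ : ℕ → ℕ) (σ : ℕ → Trm F) : up σ ∘ upRen ρ = up (σ ∘ ρ) := by
  funext n; cases n <;> rfl

theorem subst_rename (t : Trm F) (ρ : ℕ → ℕ) (σ : ℕ → Trm F) :
    subst σ (rename ρ t) = subst (σ ∘ ρ) t := by
  induction t generalizing ρ σ <;> simp_all [rename, subst, up_comp_upRen]

theorem rename_upRen_comp_up (σ : ℕ → Trm F) (ρ : ℕ → ℕ) :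
    rename (upRen ρ) ∘ up σ = up (rename ρ ∘ σ) := by
  funext n
  cases n with
  | zero => rfl
  | succ n =>
    simp only [Function.comp, up, rename_rename]
    rfl

theorem rename_subst (t : Trm F) (σ : ℕ → Trm F) (ρ : ℕ → ℕ) :
    rename ρ (subst σ t) = subst (rename ρ ∘ σ) t := by
  induction t generalizing ρ σ <;> simp_all [rename, subst, rename_upRen_comp_up]

theorem subst_up_comp_up (σ τ : ℕ → Trm F) :
    subst (up τ) ∘ up σ = up (subst τ ∘ σ) := by
  funext n
  cases n with
  | zero => rfl
  | succ n =>
    simp only [Function.comp, up, rename_subst, subst_rename]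
    rfl

theorem subst_subst (t : Trm F) (σ τ : ℕ → Trm F) :
    subst τ (subst σ t) = subst (subst τ ∘ σ) t := by
  induction t generalizing σ τ <;> simp_all [subst, subst_up_comp_up]

theorem up_var : up (var : ℕ → Trm F) = var := by
  funext n; cases n <;> rfl

theorem subst_var (t : Trm F) : subst var t = t := by
  induction t <;> simp_all [subst, up_var]

theorem subst1_subst_up (a t : Trm F) (σ : ℕ → Trm F) :
    subst1 a (subst (up σ) t) = subst (scons a σ) t := by
  rw [subst1, subst_subst]
  congr 1
  funext n
  cases n with
  | zero => rfl
  | succ n => exact (subst_rename (σ n) _ _).trans (subst_var _)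

theorem rename_subst1 (a t : Trm F) (ρ : ℕ → ℕ) :
    rename ρ (subst1 a t) = subst1 (rename ρ a) (rename (upRen ρ) t) := by
  rw [subst1, subst1, rename_subst, subst_rename]
  congr 1
  funext n; cases n <;> rfl

theorem isKind_rename (t : Trm F) (ρ : ℕ → ℕ) : IsKind (rename ρ t) ↔ IsKind t := by
  induction t generalizing ρ <;> simp_all [rename, IsKind]

theorem rename_eq_kind {t : Trm F} {ρ : ℕ → ℕ} : rename ρ t = kind ↔ t = kind := by
  cases t <;> simp [rename]

/-- Kinds all of whose product domains are neither kinds nor `KIND`. -/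
def IsStratifiedKind : Trm F → Prop
  | .type => True
  | .pi A B => ¬ IsKindLike A ∧ IsStratifiedKind B
  | _ => False

theorem isStratifiedKind_rename (t : Trm F) (ρ : ℕ → ℕ) :
    IsStratifiedKind (rename ρ t) ↔ IsStratifiedKind t := by
  induction t generalizing ρ <;>
    simp_all [rename, IsStratifiedKind, IsKindLike, isKind_rename, rename_eq_kind]

theorem IsStratifiedKind.isKind {t : Trm F} (h : IsStratifiedKind t) : IsKind t := by
  induction t <;> simp_all [IsStratifiedKind, IsKind]

theorem subst_appList_ne_kind (σ : ℕ → Trm F) (ls : List (Trm F)) {h : Trm F}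
    (hh : subst σ h ≠ kind) : subst σ (appList h ls) ≠ kind := by
  induction ls generalizing h with
  | nil => exact hh
  | cons a as ih => exact ih (by simp [subst])

end Trm

section Reduction

variable {F : Type} {R : Rules F}

theorem Red.rename {t u : Trm F} (h : Red R t u) (ρ : ℕ → ℕ) :
    Red R (Trm.rename ρ t) (Trm.rename ρ u) := by
  induction h generalizing ρ with
  | beta A b a =>
    rw [Trm.rename_subst1]
    exact Red.beta _ _ _
  | rule σ hr =>
    rw [Trm.rename_subst, Trm.rename_subst]
    exact Red.rule _ hr
  | appL _ ih => exact Red.appL (ih ρ)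
  | appR _ ih => exact Red.appR (ih ρ)
  | piL _ ih => exact Red.piL (ih ρ)
  | piR _ ih => exact Red.piR (ih _)
  | lamL _ ih => exact Red.lamL (ih ρ)
  | lamR _ ih => exact Red.lamR (ih _)

theorem RedStar.map {t u : Trm F} (h : RedStar R t u) (c : Trm F → Trm F)
    (hc : ∀ a b, Red R a b → Red R (c a) (c b)) : RedStar R (c t) (c u) := by
  induction h with
  | refl => exact Relation.ReflTransGen.refl
  | tail _ hs ih => exact Relation.ReflTransGen.tail ih (hc _ _ hs)

theorem RedStar.rename {t u : Trm F} (h : RedStar R t u) (ρ : ℕ → ℕ) :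
    RedStar R (Trm.rename ρ t) (Trm.rename ρ u) :=
  h.map _ fun _ _ hs => hs.rename ρ

theorem RedStar.app {t t' u u' : Trm F} (ht : RedStar R t t') (hu : RedStar R u u') :
    RedStar R (.app t u) (.app t' u') :=
  (ht.map (Trm.app · u) fun _ _ => Red.appL).trans
    (hu.map (Trm.app t' ·) fun _ _ => Red.appR)

theorem RedStar.pi {t t' u u' : Trm F} (ht : RedStar R t t') (hu : RedStar R u u') :
    RedStar R (.pi t u) (.pi t' u') :=
  (ht.map (Trm.pi · u) fun _ _ => Red.piL).trans
    (hu.map (Trm.pi t' ·) fun _ _ => Red.piR)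

theorem RedStar.lam {t t' u u' : Trm F} (ht : RedStar R t t') (hu : RedStar R u u') :
    RedStar R (.lam t u) (.lam t' u') :=
  (ht.map (Trm.lam · u) fun _ _ => Red.lamL).trans
    (hu.map (Trm.lam t' ·) fun _ _ => Red.lamR)

theorem redStar_up {σ σ' : ℕ → Trm F} (h : ∀ n, RedStar R (σ n) (σ' n)) (n : ℕ) :
    RedStar R (Trm.up σ n) (Trm.up σ' n) := by
  cases n with
  | zero => exact Relation.ReflTransGen.refl
  | succ n => exact (h n).rename _

theorem redStar_subst (t : Trm F) {σ σ' : ℕ → Trm F} (h : ∀ n, RedStar R (σ n) (σ' n)) :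
    RedStar R (Trm.subst σ t) (Trm.subst σ' t) := by
  induction t generalizing σ σ' with
  | type => exact Relation.ReflTransGen.refl
  | kind => exact Relation.ReflTransGen.refl
  | var n => exact h n
  | sym f => exact Relation.ReflTransGen.refl
  | pi A B ihA ihB => exact (ihA h).pi (ihB (redStar_up h))
  | app t u iht ihu => exact (iht h).app (ihu h)
  | lam A b ihA ihb => exact (ihA h).lam (ihb (redStar_up h))

theorem SubstStep.redStar {σ σ' : ℕ → Trm F} (h : SubstStep R σ σ') (n : ℕ) :
    RedStar R (σ n) (σ' n) := by
  obtain ⟨x, hx, hy⟩ := h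
  by_cases hn : n = x
  · subst hn
    exact Relation.ReflTransGen.single hx
  · rw [hy n hn]
    exact Relation.ReflTransGen.refl

theorem SubstStep.scons {σ σ' : ℕ → Trm F} (h : SubstStep R σ σ') (a : Trm F) :
    SubstStep R (Trm.scons a σ) (Trm.scons a σ') := by
  obtain ⟨x, hx, hy⟩ := h
  refine ⟨x + 1, hx, fun y hne => ?_⟩
  cases y with
  | zero => rfl
  | succ y => exact hy y (by omega)

theorem SN.redStar {t u : Trm F} (ht : SN R t) (h : RedStar R t u) : SN R u := by
  induction h with
  | refl => exact ht
  | tail _ h ih => exact ih.inv h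

/-- Newman's lemma, localized at a strongly normalizing term. -/
theorem SN.joinable (hconf : LocallyConfluent R) {t : Trm F} (ht : SN R t) {u v : Trm F}
    (hu : RedStar R t u) (hv : RedStar R t v) : Joinable R u v := by
  induction ht generalizing u v with
  | intro t _ ih =>
    rcases Relation.ReflTransGen.cases_head hu with rfl | ⟨u₁, htu, hu⟩
    · exact ⟨v, hv, Relation.ReflTransGen.refl⟩
    rcases Relation.ReflTransGen.cases_head hv with rfl | ⟨v₁, htv, hv⟩
    · exact ⟨u, Relation.ReflTransGen.refl, Relation.ReflTransGen.head htu hu⟩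
    obtain ⟨w, huw, hvw⟩ := hconf t u₁ v₁ htu htv
    obtain ⟨x, hux, hwx⟩ := ih u₁ htu hu huw
    obtain ⟨y, hxy, hvy⟩ := ih v₁ htv (Relation.ReflTransGen.trans hvw hwx) hv
    exact ⟨y, Relation.ReflTransGen.trans hux hxy, hvy⟩

theorem NormalForm.eq_of_redStar {t u : Trm F} (ht : NormalForm R t) (h : RedStar R t u) :
    u = t := by
  rcases Relation.ReflTransGen.cases_head h with rfl | ⟨v, hv, _⟩
  · rfl
  · exact (ht v hv).elim

theorem SN.redStar_normalForm (hconf : LocallyConfluent R) {t u v : Trm F} (ht : SN R t)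
    (hu : RedStar R t u) (hv : RedStar R t v) (hn : NormalForm R v) : RedStar R u v := by
  obtain ⟨w, huw, hvw⟩ := ht.joinable hconf hu hv
  rwa [hn.eq_of_redStar hvw] at huw

theorem normalForm_kind (hRS : IsRewriteSystem R) : NormalForm R .kind := by
  intro u h
  generalize ht : (Trm.kind : Trm F) = t at h
  cases h with
  | rule σ hr =>
    obtain ⟨_, f, ls, hl⟩ := hRS _ hr
    dsimp only at hl
    subst hl
    exact Trm.subst_appList_ne_kind σ ls (by simp [Trm.subst]) ht.symm
  | _ => cases ht

end Reduction

section Kinds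

variable {F : Type} {R : Rules F} {Θ sΘ : F → Trm F}

theorem Typing.ne_kind {Γ : List (Trm F)} {t U : Trm F} (h : Typing R Θ sΘ Γ t U) :
    t ≠ .kind := by
  induction h with
  | weak _ _ _ _ ih => simpa [Trm.shift, Trm.rename_eq_kind] using ih
  | conv _ _ _ _ ih => exact ih
  | _ => simp

theorem Typing.redStar (hpres : PresTyping R Θ sΘ) {Γ : List (Trm F)} {t u T : Trm F}
    (h : Typing R Θ sΘ Γ t T) (hr : RedStar R t u) : Typing R Θ sΘ Γ u T := by
  induction hr with
  | refl => exact h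
  | tail _ hs ih => exact hpres _ _ _ _ ih hs

theorem not_joinable_kind (hRS : IsRewriteSystem R) (hpres : PresTyping R Θ sΘ)
    {Γ : List (Trm F)} {B s : Trm F} (hB : Typing R Θ sΘ Γ B s) : ¬ Joinable R .kind B := by
  rintro ⟨v, hv, hBv⟩
  rw [(normalForm_kind hRS).eq_of_redStar hv] at hBv
  exact (hB.redStar hpres hBv).ne_kind rfl

theorem Typing.kind_stratified (hRS : IsRewriteSystem R) (hpres : PresTyping R Θ sΘ)
    {Γ : List (Trm F)} {T U : Trm F} (h : Typing R Θ sΘ Γ T U) (hT : T.IsKind) :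
    U = .kind ∧ T.IsStratifiedKind := by
  induction h with
  | ax => exact ⟨rfl, trivial⟩
  | weak _ _ _ _ ih =>
    obtain ⟨rfl, h⟩ := ih ((Trm.isKind_rename _ _).1 hT)
    exact ⟨rfl, (Trm.isStratifiedKind_rename _ _).2 h⟩
  | prod _ hA _ ihA ihB =>
    obtain ⟨hs, hB⟩ := ihB hT
    refine ⟨hs, ?_, hB⟩
    rintro (hk | hk)
    · exact absurd (ihA hk).1 (by simp)
    · exact hA.ne_kind hk
  | conv _ hj hB _ ih _ =>
    obtain ⟨rfl, _⟩ := ih hT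
    exact (not_joinable_kind hRS hpres hB hj).elim
  | _ => exact hT.elim

end Kinds

section Interpretation

variable {F : Type} {R : Rules F} {calI : Interp F}

theorem domD_redStar {I : Interp F} {T T' : Trm F} (hT : T ∈ domD R I) (h : RedStar R T T') :
    T' ∈ domD R I :=
  ⟨hT.1.redStar h, fun A B hAB => hT.2 A B (Relation.ReflTransGen.trans h hAB)⟩

theorem interpF_redStar (hconf : LocallyConfluent R) {I : Interp F} {T T' : Trm F}
    (hT : T ∈ domD R I) (h : RedStar R T T') : interpF R I T = interpF R I T' := by
  have key : (fun A B => RedStar R T (.pi A B) ∧ NormalForm R (.pi A B)) =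
      fun A B => RedStar R T' (.pi A B) ∧ NormalForm R (.pi A B) := by
    funext A B
    refine propext ⟨fun ⟨hr, hn⟩ => ⟨hT.1.redStar_normalForm hconf h hr hn, hn⟩,
      fun ⟨hr, hn⟩ => ⟨Relation.ReflTransGen.trans h hr, hn⟩⟩
  refine Part.ext' (iff_of_true hT (domD_redStar hT h)) fun _ _ => ?_
  simp only [interpF]
  have aux : ∀ P Q : Trm F → Trm F → Prop, P = Q → ∀ (hP : ∃ A B, P A B) (hQ : ∃ A B, Q A B),
      piPart I hP.choose hP.choose_spec.choose = piPart I hQ.choose hQ.choose_spec.choose := by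
    rintro P _ rfl _ _
    rfl
  have hiff : (∃ A B, RedStar R T (.pi A B) ∧ NormalForm R (.pi A B)) ↔
      ∃ A B, RedStar R T' (.pi A B) ∧ NormalForm R (.pi A B) := by
    simp only [funext_iff] at key
    simp only [key]
  by_cases hP : ∃ A B, RedStar R T (.pi A B) ∧ NormalForm R (.pi A B)
  · rw [dif_pos hP, dif_pos (hiff.1 hP)]
    exact aux _ _ key hP (hiff.1 hP)
  · rw [dif_neg hP, dif_neg (fun h => hP (hiff.2 h))]

theorem dom_iff_mem_domD (hfix : interpF R calI = calI) (T : Trm F) :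
    (calI T).Dom ↔ T ∈ domD R calI := by
  conv_lhs => rw [← hfix]
  rfl

theorem partMem_redStar (hconf : LocallyConfluent R) (hfix : interpF R calI = calI)
    {T T' : Trm F} (hT : T ∈ domD R calI) (h : RedStar R T T') :
    partMem calI T = partMem calI T' := by
  have := interpF_redStar hconf hT h
  rw [hfix] at this
  rw [partMem, partMem, this]

theorem interp_eq_partMem {T : Trm F} {σ : ℕ → Trm F} (hT : ¬ IsKindLike T)
    (hdom : Trm.subst σ T ∈ domD R calI) :
    interp R calI T σ = partMem calI (Trm.subst σ T) := by
  cases T <;> simp_all [IsKindLike, Trm.IsKind, interp]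

theorem interp_subst_step_of_not_isKindLike (hconf : LocallyConfluent R)
    (hfix : interpF R calI = calI) {T : Trm F} {σ σ' : ℕ → Trm F} (hT : ¬ IsKindLike T)
    (hdom : Trm.subst σ T ∈ domD R calI) (hstep : SubstStep R σ σ') :
    interp R calI T σ = interp R calI T σ' := by
  have hred := redStar_subst T hstep.redStar
  rw [interp_eq_partMem hT hdom, interp_eq_partMem hT (domD_redStar hdom hred)]
  exact partMem_redStar hconf hfix hdom hred

theorem interp_subst_step_of_isStratifiedKind (hconf : LocallyConfluent R)
    (hfix : interpF R calI = calI) {T : Trm F} {σ σ' : ℕ → Trm F} (hT : T.IsStratifiedKind)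
    (hdom : Trm.subst σ T ∈ domD R calI) (hstep : SubstStep R σ σ') :
    interp R calI T σ = interp R calI T σ' := by
  induction T generalizing σ σ' with
  | type => simp only [interp]
  | pi A B _ ihB =>
    obtain ⟨hA, hB⟩ := hT
    obtain ⟨hAdom, hBdom⟩ := hdom.2 _ _ Relation.ReflTransGen.refl
    have hAD := (dom_iff_mem_domD hfix _).1 hAdom
    simp only [interp, if_pos hB.isKind]
    rw [← interp_subst_step_of_not_isKindLike hconf hfix hA hAD hstep]
    ext t
    refine forall₂_congr fun a ha => ?_
    rw [interp_eq_partMem hA hAD] at ha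
    have hBa := hBdom _ (Part.get_mem hAdom) a (ha _ (Part.get_mem hAdom))
    rw [Trm.subst1_subst_up] at hBa
    rw [ihB hB ((dom_iff_mem_domD hfix _).1 hBa) (hstep.scons a)]
  | _ => exact hT.elim

end Interpretation

/-- Lemma 4(c) of the paper. If `T` is typable, `Tσ ∈ 𝒟` and `σ → σ'`,
then `⟦T⟧σ = ⟦T⟧σ'`. -/
theorem interp_invariant_subst_red {F : Type} (R : Rules F) (Θ sΘ : F → Trm F)
    (hRS : IsRewriteSystem R)
    (hconf : LocallyConfluent R)
    (hpres : PresTyping R Θ sΘ)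
    (calI : Interp F) (hlfp : IsLfpInterp (interpF R) calI)
    (T : Trm F) (σ σ' : ℕ → Trm F)
    (htyp : ∃ (Γ : List (Trm F)) (U : Trm F), Typing R Θ sΘ Γ T U)
    (hdom : Trm.subst σ T ∈ domD R calI)
    (hstep : SubstStep R σ σ') :
    interp R calI T σ = interp R calI T σ' := by
  obtain ⟨Γ, U, hT⟩ := htyp
  by_cases hk : T.IsKind
  · exact interp_subst_step_of_isStratifiedKind hconf hlfp.1
      (hT.kind_stratified hRS hpres hk).2 hdom hstep
  · exact interp_subst_step_of_not_isKindLike hconf hlfp.1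
      (not_or.2 ⟨hk, hT.ne_kind⟩) hdom hstep
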